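/- Let x : ℝ → ℝ² be a C^∞, λ-periodic curve parametrized by affine arc length with affine curvature k, and for r ≤ s let F(r,s) := (1/2)∫_r^s ω(x(t) − x(r), x'(t)) dt. Then there exists a function ε : (0, λ] → ℝ with ε(h)/h⁷ → 0 as h → 0⁺ such that for every r ∈ ℝ and every h ∈ (0, λ]: | F(r, r+h) − (1/2)·( h³/6 − k(r)·h⁵/120 − 3k'(r)·h⁶/720 − k''(r)·h⁷/840 + k(r)²·h⁷/5040 ) | ≤ ε(h). In other words, F(r,s) = (1/2)( (s−r)³/3! − k(r)(s−r)⁵/5! − 3k'(r)(s−r)⁶/6! − k''(r)(s−r)⁷/(7·5!) + k(r)²(s−r)⁷/7! ) + o((s−r)⁷) uniformly in r as s − r → 0. -/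

import Mathlib

open Filter
open scoped Topology

/-- The standard area form on the plane: `ω(u,v) = u₁v₂ − u₂v₁`. -/
noncomputable def om (u v : ℝ × ℝ) : ℝ := u.1 * v.2 - u.2 * v.1

/-!
Twice the area is `2 F(r, r + h) = ∫₀ʰ p` with `p(h) = ω(x(r + h) − x(r), x'(r + h))`. Since
`ω(x', x'') = 1` forces `x''' = −k x'`, the function `p` solves the linear equation
`p'' = 1 − k(r + ·) p` with `p(0) = p'(0) = 0`, and Leibniz' rule determines its derivatives at `0`
recursively from those of `k` at `r`. As `p` is jointly of class `C^7` in `(r, h)` and periodic in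
`r`, compactness bounds the Taylor remainder uniformly in `r`.
-/

lemma exists_norm_le_of_periodic_of_isCompact {Y E : Type*} [TopologicalSpace Y]
    [SeminormedAddCommGroup E] {g : ℝ → Y → E} (hg : Continuous (Function.uncurry g)) {c : ℝ}
    (hc : 0 < c) (hper : Function.Periodic g c) {K : Set Y} (hK : IsCompact K) :
    ∃ C, ∀ r, ∀ y ∈ K, ‖g r y‖ ≤ C := by
  obtain ⟨C, hC⟩ := (isCompact_Icc.prod hK).exists_bound_of_continuousOn
    (s := Set.Icc 0 c ×ˢ K) hg.continuousOn
  refine ⟨C, fun r y hy => ?_⟩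
  obtain ⟨r', hr', heq⟩ := hper.exists_mem_Ico₀ hc r
  rw [heq]
  exact hC (r', y) ⟨Set.Ico_subset_Icc_self hr', hy⟩

section UniformTaylor

variable {E : Type*} [NormedAddCommGroup E] [NormedSpace ℝ E]

lemma contDiff_iteratedDeriv {n : ℕ} (m : ℕ) {f : ℝ → E} (hf : ContDiff ℝ (n + m : ℕ) f) :
    ContDiff ℝ n (iteratedDeriv m f) := by
  simpa only [iteratedDeriv_eq_iterate] using hf.iterate_deriv' n m

lemma hasDerivAt_iteratedDeriv {n m : ℕ} {f : ℝ → E} (hf : ContDiff ℝ n f) (hm : m < n) (t : ℝ) :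
    HasDerivAt (iteratedDeriv m f) (iteratedDeriv (m + 1) f t) t := by
  rw [iteratedDeriv_succ]
  exact (hf.differentiable_iteratedDeriv m (mod_cast hm) t).hasDerivAt

lemma contDiff_uncurry_iteratedDeriv {X : Type*} [NormedAddCommGroup X] [NormedSpace ℝ X]
    (n m : ℕ) {f : X → ℝ → E} (hf : ContDiff ℝ (n + m : ℕ) (Function.uncurry f)) :
    ContDiff ℝ n (Function.uncurry fun r => iteratedDeriv m (f r)) := by
  induction m generalizing f with
  | zero => simpa using! hf
  | succ m ih =>
    simp only [iteratedDeriv_succ']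
    apply ih
    have hcurry : ContDiff ℝ ((n + m : ℕ) + 1)
        (Function.uncurry fun (q : X × ℝ) (t : ℝ) => f q.1 t) :=
      hf.comp (contDiff_fst.fst.prodMk contDiff_snd)
    exact (hcurry.fderiv_succ contDiff_snd).clm_apply contDiff_const

lemma exists_norm_sub_taylor_le_of_periodic (n : ℕ) {f : ℝ → ℝ → E}
    (hf : ContDiff ℝ (n + 1 : ℕ) (Function.uncurry f)) {c : ℝ} (hc : 0 < c)
    (hper : Function.Periodic f c) {L : ℝ} (hL : 0 < L) :
    ∃ C, ∀ r, ∀ h ∈ Set.Icc 0 L,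
      ‖f r h - ∑ i ∈ Finset.range (n + 1), (h ^ i / i.factorial) • iteratedDeriv i (f r) 0‖ ≤
        C * h ^ (n + 1) := by
  have hfr (r : ℝ) : ContDiff ℝ (n + 1 : ℕ) (f r) := hf.comp (contDiff_prodMk_right r)
  have hwithin (r t : ℝ) (ht : t ∈ Set.Icc 0 L) (i : ℕ) (hi : i ≤ n + 1) :
      iteratedDerivWithin i (f r) (Set.Icc 0 L) t = iteratedDeriv i (f r) t :=
    iteratedDerivWithin_eq_iteratedDeriv (uniqueDiffOn_Icc hL)
      ((hfr r).of_le (mod_cast hi)).contDiffAt ht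
  have hcont : Continuous (Function.uncurry fun r => iteratedDeriv (n + 1) (f r)) :=
    (contDiff_uncurry_iteratedDeriv 0 (n + 1) (by simpa using hf)).continuous
  obtain ⟨C, hC⟩ := exists_norm_le_of_periodic_of_isCompact hcont hc
    (fun r => by simp only [hper r]) (isCompact_Icc (a := 0) (b := L))
  refine ⟨C / n.factorial, fun r h hh => ?_⟩
  have htaylor := taylor_mean_remainder_bound hL.le (mod_cast (hfr r).contDiffOn) hh
    fun t ht => (hwithin r t ht _ le_rfl).symm ▸ hC r t ht
  rw [taylor_within_apply, sub_zero, mul_div_right_comm] at htaylor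
  convert htaylor using 3
  refine Finset.sum_congr rfl fun i hi => ?_
  rw [hwithin r 0 (Set.left_mem_Icc.2 hL.le) i (Finset.mem_range.1 hi).le, div_eq_inv_mul]

lemma integral_taylor_sum [CompleteSpace E] (n : ℕ) (a : ℕ → E) (h : ℝ) :
    ∫ t in 0..h, ∑ i ∈ Finset.range n, (t ^ i / i.factorial) • a i =
      ∑ i ∈ Finset.range n, (h ^ (i + 1) / (i + 1).factorial) • a i := by
  rw [intervalIntegral.integral_finsetSum fun i _ =>
    (by fun_prop : Continuous fun t : ℝ => (t ^ i / i.factorial) • a i).intervalIntegrable 0 h]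
  refine Finset.sum_congr rfl fun i _ => ?_
  rw [intervalIntegral.integral_smul_const, intervalIntegral.integral_div, integral_pow,
    Nat.factorial_succ]
  congr 1
  simp only [zero_pow i.succ_ne_zero, sub_zero, Nat.cast_mul, Nat.cast_add_one, div_div]

lemma exists_norm_integral_sub_taylor_le_of_periodic [CompleteSpace E] (n : ℕ) {f : ℝ → ℝ → E}
    (hf : ContDiff ℝ (n + 1 : ℕ) (Function.uncurry f)) {c : ℝ} (hc : 0 < c)
    (hper : Function.Periodic f c) {L : ℝ} (hL : 0 < L) :
    ∃ C, ∀ r, ∀ h ∈ Set.Icc 0 L,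
      ‖(∫ t in 0..h, f r t) - ∑ i ∈ Finset.range (n + 1),
        (h ^ (i + 1) / (i + 1).factorial) • iteratedDeriv i (f r) 0‖ ≤ C * h ^ (n + 2) := by
  obtain ⟨C, hC⟩ := exists_norm_sub_taylor_le_of_periodic n hf hc hper hL
  refine ⟨C / (n + 2), fun r h hh => ?_⟩
  have hfr : Continuous (f r) := (hf.comp (contDiff_prodMk_right r)).continuous
  rw [← integral_taylor_sum, ← intervalIntegral.integral_sub (hfr.intervalIntegrable 0 h)
    ((by fun_prop : Continuous _).intervalIntegrable 0 h)]
  calc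
    _ ≤ ∫ t in 0..h, C * t ^ (n + 1) :=
      intervalIntegral.norm_integral_le_of_norm_le hh.1
        (.of_forall fun t ht => hC r t ⟨ht.1.le, ht.2.trans hh.2⟩)
        ((by fun_prop : Continuous _).intervalIntegrable 0 h)
    _ = C / (n + 2) * h ^ (n + 2) := by
      rw [intervalIntegral.integral_const_mul, integral_pow]
      push_cast
      ring

end UniformTaylor

section LinearSecondOrder

variable {p κ : ℝ → ℝ}

lemma iteratedDeriv_add_two_of_linear_ode {f : ℝ → ℝ} (n : ℕ) {t : ℝ} (hf : ContDiffAt ℝ n f t)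
    (hκ : ContDiffAt ℝ n κ t) (hp : ContDiffAt ℝ n p t)
    (hode : iteratedDeriv 2 p = fun t => f t - κ t * p t) :
    iteratedDeriv (n + 2) p t = iteratedDeriv n f t -
      ∑ i ∈ Finset.range (n + 1), n.choose i * iteratedDeriv i κ t * iteratedDeriv (n - i) p t := by
  have hcomp : iteratedDeriv (n + 2) p = iteratedDeriv n (iteratedDeriv 2 p) := by
    simp only [iteratedDeriv_eq_iterate, Function.iterate_add_apply]
  rw [hcomp, hode, iteratedDeriv_fun_sub hf (hκ.mul hp), iteratedDeriv_fun_mul hκ hp]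

lemma taylor_sum_primitive_of_linear_ode (hκ : ContDiff ℝ 4 κ) (hp : ContDiff ℝ 4 p)
    (hode : iteratedDeriv 2 p = fun t => 1 - κ t * p t) (hp0 : p 0 = 0) (hp1 : deriv p 0 = 0)
    (h : ℝ) :
    ∑ i ∈ Finset.range 7, (h ^ (i + 1) / (i + 1).factorial) • iteratedDeriv i p 0 =
      h ^ 3 / 6 - κ 0 * h ^ 5 / 120 - 3 * deriv κ 0 * h ^ 6 / 720 -
        deriv (deriv κ) 0 * h ^ 7 / 840 + κ 0 ^ 2 * h ^ 7 / 5040 := by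
  have hrec (n : ℕ) (hn : n ≤ 4) := iteratedDeriv_add_two_of_linear_ode n contDiffAt_const
    (hκ.of_le (mod_cast hn)).contDiffAt (hp.of_le (mod_cast hn)).contDiffAt (t := 0) hode
  have hp2 : iteratedDeriv 2 p 0 = 1 := by simp [hode, hp0]
  have hp3 : iteratedDeriv 3 p 0 = 0 := by
    simpa [Finset.sum_range_succ, iteratedDeriv_const, hp0, hp1] using hrec 1 (by norm_num)
  have hp4 : iteratedDeriv 4 p 0 = -κ 0 := by
    simpa [Finset.sum_range_succ, iteratedDeriv_const, hp0, hp1, hp2] using hrec 2 (by norm_num)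
  have hp5 : iteratedDeriv 5 p 0 = -3 * deriv κ 0 := by
    simpa [Finset.sum_range_succ, iteratedDeriv_const, hp0, hp1, hp2, hp3]
      using hrec 3 (by norm_num)
  have hκ2 : iteratedDeriv 2 κ = deriv (deriv κ) := by simp [iteratedDeriv_succ']
  have hp6 : iteratedDeriv 6 p 0 = -(6 * deriv (deriv κ) 0) + κ 0 * κ 0 := by
    have hchoose : Nat.choose 4 2 = 6 := rfl
    simpa [Finset.sum_range_succ, iteratedDeriv_const, hp0, hp1, hp2, hp3, hp4, hκ2, hchoose]
      using hrec 4 le_rfl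
  simp only [Finset.sum_range_succ, Finset.sum_range_zero, smul_eq_mul, iteratedDeriv_zero,
    iteratedDeriv_one, hp0, hp1, hp2, hp3, hp4, hp5, hp6, Nat.factorial]
  push_cast
  ring

end LinearSecondOrder

section AreaForm

lemma om_self (u : ℝ × ℝ) : om u u = 0 := by
  unfold om
  ring

lemma om_neg_smul_right (c : ℝ) (u v : ℝ × ℝ) : om u (-c • v) = -c * om u v := by
  simp only [om, Prod.smul_fst, Prod.smul_snd, smul_eq_mul]
  ring

lemma eq_neg_om_smul_of_om_eq_one_of_om_eq_zero {u v w : ℝ × ℝ} (huv : om u v = 1)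
    (huw : om u w = 0) : w = -om v w • u := by
  simp only [om] at huv huw
  ext <;> simp only [om, Prod.smul_fst, Prod.smul_snd, smul_eq_mul]
  · linear_combination -w.1 * huv + v.1 * huw
  · linear_combination -w.2 * huv + v.2 * huw

lemma contDiff_om {X : Type*} [NormedAddCommGroup X] [NormedSpace ℝ X] {n : WithTop ℕ∞}
    {u v : X → ℝ × ℝ} (hu : ContDiff ℝ n u) (hv : ContDiff ℝ n v) :
    ContDiff ℝ n fun q => om (u q) (v q) := by
  unfold om
  fun_prop

lemma hasDerivAt_om {u v : ℝ → ℝ × ℝ} {u' v' : ℝ × ℝ} {t : ℝ} (hu : HasDerivAt u u' t)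
    (hv : HasDerivAt v v' t) :
    HasDerivAt (fun s => om (u s) (v s)) (om u' (v t) + om (u t) v') t := by
  have hu₁ : HasDerivAt (fun s => (u s).1) u'.1 t := by simpa using hu.hasFDerivAt.fst.hasDerivAt
  have hu₂ : HasDerivAt (fun s => (u s).2) u'.2 t := by simpa using hu.hasFDerivAt.snd.hasDerivAt
  have hv₁ : HasDerivAt (fun s => (v s).1) v'.1 t := by simpa using hv.hasFDerivAt.fst.hasDerivAt
  have hv₂ : HasDerivAt (fun s => (v s).2) v'.2 t := by simpa using hv.hasFDerivAt.snd.hasDerivAt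
  refine ((hu₁.mul hv₂).sub (hu₂.mul hv₁)).congr_deriv ?_
  simp only [om]
  ring

end AreaForm

section AffineArcLength

variable {x : ℝ → ℝ × ℝ}

/-- The curve `x` is parametrized by affine arc length: `ω(x', x'') = 1`. Differentiability is not
part of the definition and is assumed separately. -/
def IsAffineArcLength (x : ℝ → ℝ × ℝ) : Prop :=
  ∀ s, om (deriv x s) (iteratedDeriv 2 x s) = 1

/-- The affine curvature `k = ω(x'', x''')` of a curve parametrized by affine arc length. -/
noncomputable def affineCurvature (x : ℝ → ℝ × ℝ) (s : ℝ) : ℝ :=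
  om (iteratedDeriv 2 x s) (iteratedDeriv 3 x s)

/-- The signed area `F(r, s)` of the region bounded by the arc `x([r, s])` and its chord. -/
noncomputable def segmentArea (x : ℝ → ℝ × ℝ) (r s : ℝ) : ℝ :=
  (1 / 2) * ∫ t in r..s, om (x t - x r) (deriv x t)

/-- Twice the rate of growth of `F(r, r + h)` as a function of `h`, where `F` is `segmentArea x`.
The second argument is the offset `h` from `r`, so that periodicity of `x` becomes periodicity in
`r` alone. -/
noncomputable def segmentDensity (x : ℝ → ℝ × ℝ) (r h : ℝ) : ℝ :=
  om (x (r + h) - x r) (deriv x (r + h))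

lemma segmentArea_add_eq_integral_segmentDensity (x : ℝ → ℝ × ℝ) (r h : ℝ) :
    segmentArea x r (r + h) = (1 / 2) * ∫ t in 0..h, segmentDensity x r t := by
  simp only [segmentArea, segmentDensity]
  rw [intervalIntegral.integral_comp_add_left (fun t => om (x t - x r) (deriv x t)), add_zero]

lemma segmentDensity_zero (x : ℝ → ℝ × ℝ) (r : ℝ) : segmentDensity x r 0 = 0 := by
  simp [segmentDensity, om]

lemma periodic_segmentDensity {c : ℝ} (hper : Function.Periodic x c) :
    Function.Periodic (segmentDensity x) c := by
  have hderiv : Function.Periodic (deriv x) c := fun s => by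
    rw [← deriv_comp_add_const, funext hper]
  intro r
  ext h
  simp only [segmentDensity, add_right_comm r c h, hper _, hderiv _]

lemma contDiff_uncurry_segmentDensity {n : WithTop ℕ∞} (hx : ContDiff ℝ (n + 1) x) :
    ContDiff ℝ n (Function.uncurry (segmentDensity x)) := by
  have hx₀ : ContDiff ℝ n x := hx.of_le le_self_add
  exact contDiff_om (by fun_prop) (by fun_prop)

lemma contDiff_affineCurvature {n : ℕ} (hx : ContDiff ℝ (n + 3 : ℕ) x) :
    ContDiff ℝ n (affineCurvature x) :=
  contDiff_om (contDiff_iteratedDeriv 2 (hx.of_le (mod_cast (by omega))))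
    (contDiff_iteratedDeriv 3 hx)

lemma hasDerivAt_chord (hx : Differentiable ℝ x) (r h : ℝ) :
    HasDerivAt (fun h => x (r + h) - x r) (deriv x (r + h)) h :=
  ((hx (r + h)).hasDerivAt.comp_const_add r h).sub_const (x r)

lemma deriv_segmentDensity (hx : ContDiff ℝ 2 x) (r : ℝ) :
    deriv (segmentDensity x r) = fun h => om (x (r + h) - x r) (iteratedDeriv 2 x (r + h)) := by
  ext h
  have hx₁ : HasDerivAt (fun h => deriv x (r + h)) (iteratedDeriv 2 x (r + h)) h := by
    simpa using (hasDerivAt_iteratedDeriv hx one_lt_two (r + h)).comp_const_add r h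
  simpa only [om_self, zero_add] using!
    (hasDerivAt_om (hasDerivAt_chord (hx.differentiable two_ne_zero) r h) hx₁).deriv

lemma deriv_segmentDensity_zero (hx : ContDiff ℝ 2 x) (r : ℝ) :
    deriv (segmentDensity x r) 0 = 0 := by
  simp [deriv_segmentDensity hx, om]

lemma iteratedDeriv_three_eq_neg_affineCurvature_smul (hx : ContDiff ℝ 3 x)
    (haff : IsAffineArcLength x) (s : ℝ) :
    iteratedDeriv 3 x s = -affineCurvature x s • deriv x s := by
  have hx₁ := hasDerivAt_iteratedDeriv (m := 1) hx (by norm_num) s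
  have hx₂ := hasDerivAt_iteratedDeriv (m := 2) hx (by norm_num) s
  rw [iteratedDeriv_one] at hx₁
  have hderiv := hasDerivAt_om hx₁ hx₂
  rw [om_self, zero_add, funext haff] at hderiv
  exact eq_neg_om_smul_of_om_eq_one_of_om_eq_zero (haff s)
    (hderiv.unique (hasDerivAt_const s (1 : ℝ)))

lemma iteratedDeriv_two_segmentDensity (hx : ContDiff ℝ 3 x) (haff : IsAffineArcLength x)
    (r : ℝ) :
    iteratedDeriv 2 (segmentDensity x r) =
      fun h => 1 - affineCurvature x (r + h) * segmentDensity x r h := by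
  ext h
  have hx₂ := (hasDerivAt_iteratedDeriv (m := 2) hx (by norm_num) (r + h)).comp_const_add r h
  rw [iteratedDeriv_succ, iteratedDeriv_one, deriv_segmentDensity (hx.of_le (by norm_num)),
    (hasDerivAt_om (hasDerivAt_chord (hx.differentiable three_ne_zero) r h) hx₂).deriv, haff,
    iteratedDeriv_three_eq_neg_affineCurvature_smul hx haff, om_neg_smul_right, segmentDensity]
  ring

theorem exists_abs_segmentArea_sub_le (hx : ContDiff ℝ 8 x) (haff : IsAffineArcLength x)
    {c : ℝ} (hc : 0 < c) (hper : Function.Periodic x c) {L : ℝ} (hL : 0 < L) :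
    ∃ C, ∀ r, ∀ h ∈ Set.Icc 0 L,
      |segmentArea x r (r + h) - (1 / 2) * (h ^ 3 / 6 - affineCurvature x r * h ^ 5 / 120 -
        3 * deriv (affineCurvature x) r * h ^ 6 / 720 -
        deriv (deriv (affineCurvature x)) r * h ^ 7 / 840 +
        affineCurvature x r ^ 2 * h ^ 7 / 5040)| ≤ C * h ^ 8 := by
  have hdensity : ContDiff ℝ (6 + 1 : ℕ) (Function.uncurry (segmentDensity x)) :=
    contDiff_uncurry_segmentDensity (hx.of_le (by norm_num))
  obtain ⟨C, hC⟩ := exists_norm_integral_sub_taylor_le_of_periodic 6 hdensity hc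
    (periodic_segmentDensity hper) hL
  refine ⟨1 / 2 * C, fun r h hh => ?_⟩
  have hcurvature : ContDiff ℝ 4 (fun h => affineCurvature x (r + h)) :=
    (contDiff_affineCurvature (n := 4) (hx.of_le (by norm_num))).comp
      (contDiff_const.add contDiff_id)
  have hderiv : deriv (fun h => affineCurvature x (r + h)) =
      fun h => deriv (affineCurvature x) (r + h) := funext (deriv_comp_const_add _ _)
  have hsum := taylor_sum_primitive_of_linear_ode (p := segmentDensity x r) hcurvature
    ((hdensity.comp (contDiff_prodMk_right r)).of_le (by norm_num))
    (iteratedDeriv_two_segmentDensity (hx.of_le (by norm_num)) haff r) (segmentDensity_zero x r)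
    (deriv_segmentDensity_zero (hx.of_le (by norm_num)) r) h
  simp only [hderiv, deriv_comp_const_add, add_zero] at hsum
  rw [segmentArea_add_eq_integral_segmentDensity, ← hsum, ← mul_sub, abs_mul, mul_assoc,
    abs_of_pos one_half_pos]
  gcongr
  exact hC r h hh

end AffineArcLength

lemma tendsto_const_mul_pow_div_pow {𝕜 : Type*} [Field 𝕜] [TopologicalSpace 𝕜] [ContinuousMul 𝕜]
    (C : 𝕜) {m n : ℕ} (hnm : n < m) :
    Tendsto (fun h => C * h ^ m / h ^ n) (𝓝[≠] 0) (𝓝 0) := by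
  have hpow : Tendsto (fun h => C * h ^ (m - n)) (𝓝[≠] 0) (𝓝 0) := by
    have hcont : Continuous fun h : 𝕜 => C * h ^ (m - n) := by fun_prop
    simpa [(Nat.sub_pos_of_lt hnm).ne'] using (hcont.tendsto 0).mono_left nhdsWithin_le_nhds
  refine hpow.congr' ?_
  filter_upwards [self_mem_nhdsWithin] with h (hh : h ≠ 0)
  rw [pow_sub₀ h hh hnm.le, mul_div_assoc, div_eq_mul_inv]

theorem stmt_3_general (x : ℝ → ℝ × ℝ) (lam : ℝ) (hlam : 0 < lam) (hx : ContDiff ℝ 8 x)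
    (haff : ∀ s : ℝ, om (deriv x s) (iteratedDeriv 2 x s) = 1)
    (hper : ∀ s : ℝ, x (s + lam) = x s)
    (k : ℝ → ℝ) (hk : ∀ s : ℝ, k s = om (iteratedDeriv 2 x s) (iteratedDeriv 3 x s))
    (F : ℝ → ℝ → ℝ)
    (hF : ∀ r s : ℝ, F r s = (1 / 2) * ∫ t in r..s, om (x t - x r) (deriv x t)) :
    ∃ ε : ℝ → ℝ,
      Tendsto (fun h => ε h / h ^ 7) (𝓝[>] 0) (𝓝 0) ∧
      ∀ r : ℝ, ∀ h ∈ Set.Ioc 0 lam,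
        |F r (r + h) -
          (1 / 2) * (h ^ 3 / 6 - k r * h ^ 5 / 120 - 3 * deriv k r * h ^ 6 / 720 -
            deriv (deriv k) r * h ^ 7 / 840 + (k r) ^ 2 * h ^ 7 / 5040)| ≤ ε h := by
  obtain rfl : k = affineCurvature x := funext hk
  obtain rfl : F = segmentArea x := funext₂ hF
  obtain ⟨C, hC⟩ := exists_abs_segmentArea_sub_le hx haff hlam hper hlam
  exact ⟨fun h => C * h ^ 8,
    (tendsto_const_mul_pow_div_pow C (by norm_num)).mono_left (nhdsGT_le_nhdsNE 0),
    fun r h hh => hC r h (Set.Ioc_subset_Icc_self hh)⟩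

theorem stmt_3 (x : ℝ → ℝ × ℝ) (lam : ℝ) (hlam : 0 < lam) (hx : ContDiff ℝ (⊤ : ℕ∞) x)
    (haff : ∀ s : ℝ, om (deriv x s) (iteratedDeriv 2 x s) = 1)
    (hper : ∀ s : ℝ, x (s + lam) = x s)
    (k : ℝ → ℝ) (hk : ∀ s : ℝ, k s = om (iteratedDeriv 2 x s) (iteratedDeriv 3 x s))
    (F : ℝ → ℝ → ℝ)
    (hF : ∀ r s : ℝ, F r s = (1 / 2) * ∫ t in r..s, om (x t - x r) (deriv x t)) :
    ∃ ε : ℝ → ℝ,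
      Tendsto (fun h => ε h / h ^ 7) (𝓝[>] 0) (𝓝 0) ∧
      ∀ r : ℝ, ∀ h ∈ Set.Ioc 0 lam,
        |F r (r + h) -
          (1 / 2) * (h ^ 3 / 6 - k r * h ^ 5 / 120 - 3 * deriv k r * h ^ 6 / 720 -
            deriv (deriv k) r * h ^ 7 / 840 + (k r) ^ 2 * h ^ 7 / 5040)| ≤ ε h :=
  stmt_3_general x lam hlam (mod_cast contDiff_infty.1 hx 8) haff hper k hk F hF
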